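/- Let R be a Z²-algebra over a field k satisfying the standing assumptions and let (m,n) ∈ Z². Set N := dim_k R_{(m,n),(m+1,n)} and N' := dim_k R_{(m,n),(m,n+1)}. Then there exist morphisms e_{(m+1,n)}R^{⊕N} → e_{(m,n)}R and e_{(m,n+1)}R^{⊕N'} → e_{(m,n)}R in Gr(R) whose cokernels are torsion modules (the first cokernel vanishes in all degrees (x,y) with x > m and y ≥ n, the second in all degrees with x ≥ m and y > n); consequently both induced morphisms in QGr(R) are epimorphisms. -/

import Mathlib

/- Shared infrastructure: `G`-algebras over a field `k` (Z²-algebras when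
`G = ℤ × ℤ`, Z-algebras when `G = ℤ`), their graded right modules, torsion
modules and the quotient category `QGr` (realized, following
Gabriel/Serre, as the localization of `Gr` at the morphisms having torsion
kernel and cokernel). -/

open CategoryTheory Limits

noncomputable section

set_option autoImplicit false

/-- A `G`-algebra over `k`: components `C a b`, bilinear multiplication,
local units.  For `G = ℤ × ℤ` this is exactly a `ℤ²`-algebra. -/
structure GAlgebra (k : Type) [Field k] (G : Type) where
  C : G → G → Type
  [acg : ∀ a b, AddCommGroup (C a b)]
  [mod : ∀ a b, Module k (C a b)]
  mul : ∀ {a b c : G}, C a b →ₗ[k] C b c →ₗ[k] C a c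
  one : ∀ a, C a a
  one_mul : ∀ {a b : G} (x : C a b), mul (one a) x = x
  mul_one : ∀ {a b : G} (x : C a b), mul x (one b) = x
  mul_assoc : ∀ {a b c d : G} (x : C a b) (y : C b c) (z : C c d),
    mul (mul x y) z = mul x (mul y z)

attribute [instance] GAlgebra.acg GAlgebra.mod

variable {k : Type} [Field k] {G : Type}

/-- A graded right module over a `G`-algebra. -/
structure GrMod (R : GAlgebra k G) where
  M : G → Type
  [acg : ∀ a, AddCommGroup (M a)]
  [mod : ∀ a, Module k (M a)]
  act : ∀ {a b : G}, M a →ₗ[k] R.C a b →ₗ[k] M b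
  act_one : ∀ {a : G} (x : M a), act x (R.one a) = x
  act_mul : ∀ {a b c : G} (x : M a) (r : R.C a b) (s : R.C b c),
    act (act x r) s = act x (R.mul r s)

attribute [instance] GrMod.acg GrMod.mod

/-- Morphisms of graded modules. -/
@[ext]
structure GrHom {R : GAlgebra k G} (M N : GrMod R) where
  app : ∀ a, M.M a →ₗ[k] N.M a
  natural : ∀ {a b : G} (x : M.M a) (r : R.C a b),
    app b (M.act x r) = N.act (app a x) r

/-- The category `Gr(R)` of graded right `R`-modules. -/
instance GrMod.instCategory (R : GAlgebra k G) : Category (GrMod R) where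
  Hom M N := GrHom M N
  id M := ⟨fun _ => LinearMap.id, fun _ _ => rfl⟩
  comp f g := ⟨fun a => (g.app a).comp (f.app a), fun x r => by
    simp only [LinearMap.comp_apply, f.natural, g.natural]⟩
  id_comp f := rfl
  comp_id f := rfl
  assoc f g h := rfl

/-- The projective generator `e_a R` of `Gr(R)`. -/
def freeMod (R : GAlgebra k G) (a : G) : GrMod R where
  M b := R.C a b
  act := R.mul
  act_one := R.mul_one
  act_mul := R.mul_assoc

/-- Finite direct sums in `Gr(R)`. -/
def fdsum {R : GAlgebra k G} {n : ℕ} (F : Fin n → GrMod R) : GrMod R where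
  M a := ∀ i, (F i).M a
  act {a b} := LinearMap.mk₂ k (fun x r i => (F i).act (x i) r)
    (fun x y r => by funext i; simp)
    (fun c x r => by funext i; simp)
    (fun x r s => by funext i; simp)
    (fun c x r => by funext i; simp)
  act_one {a} x := by funext i; exact (F i).act_one (x i)
  act_mul {a b c} x r s := by funext i; exact (F i).act_mul (x i) r s

/-- The morphism `e_i R ⟶ e_j R` given by left multiplication with
`r ∈ R_{j,i}`; this realizes the canonical identification
`Hom(e_i R, e_j R) ≅ R_{j,i}`. -/
def freeHom {R : GAlgebra k G} {i j : G} (r : R.C j i) :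
    freeMod R i ⟶ freeMod R j where
  app a := R.mul r
  natural x s := (R.mul_assoc r x s).symm

/-- A graded module is right-(upper-)bounded if it vanishes in all
sufficiently large degrees (for `G = ℤ×ℤ` with the product order this is
`M_{(i,j)} = 0` for all `i ≥ i₀, j ≥ j₀`). -/
def GrMod.IsBdd [LE G] {R : GAlgebra k G} (M : GrMod R) : Prop :=
  ∃ g0 : G, ∀ b : G, g0 ≤ b → ∀ x : M.M b, x = 0

/-- Torsion graded modules.  (A module is a direct limit of
right-upper-bounded modules iff every cyclic submodule is
right-upper-bounded, which is the elementwise form used here.) -/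
def IsTorsionMod [LE G] {R : GAlgebra k G} (N : GrMod R) : Prop :=
  ∀ (a : G) (x : N.M a), ∃ g0 : G, ∀ b : G, g0 ≤ b → ∀ r : R.C a b,
    N.act x r = 0

/-- A graded module is finitely generated if finitely many homogeneous
elements generate it. -/
def GrMod.IsFG {R : GAlgebra k G} (M : GrMod R) : Prop :=
  ∃ (n : ℕ) (d : Fin n → G) (g : ∀ i, M.M (d i)),
    ∀ (b : G) (y : M.M b), y ∈ Submodule.span k
      {z : M.M b | ∃ (i : Fin n) (r : R.C (d i) b), z = M.act (g i) r}

/-- Graded submodules of a graded module. -/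
structure GrSubmodule {R : GAlgebra k G} (N : GrMod R) where
  S : ∀ a, Submodule k (N.M a)
  act_mem : ∀ {a b : G} (x : N.M a), x ∈ S a → ∀ r : R.C a b, N.act x r ∈ S b

/-- A graded submodule is finitely generated if finitely many homogeneous
elements of it generate it. -/
def GrSubmodule.FG {R : GAlgebra k G} {N : GrMod R} (T : GrSubmodule N) : Prop :=
  ∃ (n : ℕ) (d : Fin n → G) (g : ∀ i, N.M (d i)) (_ : ∀ i, g i ∈ T.S (d i)),
    ∀ b : G, (T.S b : Set (N.M b)) ⊆
      ↑(Submodule.span k {z : N.M b | ∃ (i : Fin n) (r : R.C (d i) b),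
        z = N.act (g i) r})

/-- The morphisms of `Gr(R)` whose kernel and cokernel are torsion.
`QGr(R) = Gr(R)/Tors(R)` is the localization of `Gr(R)` at this class. -/
def torsionW [LE G] (R : GAlgebra k G) : MorphismProperty (GrMod R) :=
  fun M N f =>
    (∀ (a : G) (x : M.M a), GrHom.app f a x = 0 →
      ∃ g0 : G, ∀ b : G, g0 ≤ b → ∀ r : R.C a b, M.act x r = 0) ∧
    (∀ (a : G) (y : N.M a), ∃ g0 : G, ∀ b : G, g0 ≤ b → ∀ r : R.C a b,
      N.act y r ∈ LinearMap.range (GrHom.app f b))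

/-- The quotient category `QGr(R) := Gr(R)/Tors(R)`, realized as the
localization of `Gr(R)` at the morphisms with torsion kernel and cokernel. -/
abbrev QGr [LE G] (R : GAlgebra k G) := (torsionW R).Localization

/-- The diagonal-like sub-`ℤ`-algebra `R_Δ` of a `ℤ²`-algebra. -/
def diagAlg (R : GAlgebra k (ℤ × ℤ)) (Δ : ℤ → ℤ × ℤ) : GAlgebra k ℤ where
  C i j := R.C (Δ i) (Δ j)
  mul := R.mul
  one i := R.one (Δ i)
  one_mul := R.one_mul
  mul_one := R.mul_one
  mul_assoc := R.mul_assoc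

/-- `Δ : ℤ → ℤ²` is diagonal-like if every element of `ℤ²` lies below some
`Δ(i)` in the product order. -/
def DiagonalLike (Δ : ℤ → ℤ × ℤ) : Prop := ∀ ab : ℤ × ℤ, ∃ i : ℤ, ab ≤ Δ i

/-- The standing assumptions on a `ℤ²`-algebra `R`:
`Gr(R)` is locally Noetherian (equivalently: every graded submodule of each
projective generator `e_a R` is finitely generated), all components are
finite dimensional, `R_{(i,j),(i,j)} = k`, and `R₊` is generated in degrees
`(0,1)` and `(1,0)` (surjectivity of the multiplication maps, expressed via
spans of products). -/
structure Standing (R : GAlgebra k (ℤ × ℤ)) : Prop where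
  locNoeth : ∀ (a : ℤ × ℤ) (T : GrSubmodule (freeMod R a)), T.FG
  finDim : ∀ a b : ℤ × ℤ, FiniteDimensional k (R.C a b)
  diagK : ∀ (a : ℤ × ℤ) (x : R.C a a), ∃ c : k, x = c • R.one a
  genH : ∀ i j m n : ℤ, i < m → j ≤ n → ∀ x : R.C (i, j) (m, n),
    x ∈ Submodule.span k {y : R.C (i, j) (m, n) |
      ∃ (u : R.C (i, j) (i + 1, j)) (v : R.C (i + 1, j) (m, n)), y = R.mul u v}
  genV : ∀ i j m n : ℤ, i ≤ m → j < n → ∀ x : R.C (i, j) (m, n),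
    x ∈ Submodule.span k {y : R.C (i, j) (m, n) |
      ∃ (u : R.C (i, j) (i, j + 1)) (v : R.C (i, j + 1) (m, n)), y = R.mul u v}

section Helpers

/-- Saturation: `x·R` eventually lies in `S`. -/
def GrSubmodule.Sat {R : GAlgebra k (ℤ × ℤ)} {N : GrMod R} (S : GrSubmodule N)
    {a : ℤ × ℤ} (x : N.M a) : Prop :=
  ∃ g0 : ℤ × ℤ, ∀ b : ℤ × ℤ, g0 ≤ b → ∀ r : R.C a b, N.act x r ∈ S.S b

/-- The zero submodule. -/
def botSub {R : GAlgebra k G} (N : GrMod R) : GrSubmodule N where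
  S _ := ⊥
  act_mem x hx r := by
    rw [Submodule.mem_bot] at hx ⊢
    rw [hx]; simp

/-- The image of a morphism. -/
def rangeSub {R : GAlgebra k G} {M N : GrMod R} (f : GrHom M N) : GrSubmodule N where
  S a := LinearMap.range (f.app a)
  act_mem := by
    rintro a b _ ⟨x, rfl⟩ r
    exact ⟨M.act x r, f.natural x r⟩

/-- The quotient by a graded submodule. -/
def quotMod {R : GAlgebra k G} {N : GrMod R} (T : GrSubmodule N) : GrMod R where
  M a := N.M a ⧸ T.S a
  act {a b} := (T.S a).liftQ ((N.act (a := a) (b := b)).compr₂ (T.S b).mkQ) (by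
    intro x hx
    rw [LinearMap.mem_ker]
    ext r
    simpa using T.act_mem x hx r)
  act_one {a} x := by
    obtain ⟨x, rfl⟩ := (T.S a).mkQ_surjective x
    simp [N.act_one]
  act_mul {a b c} x r s := by
    obtain ⟨x, rfl⟩ := (T.S a).mkQ_surjective x
    simp [N.act_mul]

/-- The projection to the quotient. -/
def quotMk {R : GAlgebra k G} {N : GrMod R} (T : GrSubmodule N) : GrHom N (quotMod T) where
  app a := (T.S a).mkQ
  natural _ _ := rfl

theorem quotMk_eq_zero {R : GAlgebra k G} {N : GrMod R} (T : GrSubmodule N) {a : G}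
    (x : N.M a) : (quotMk T).app a x = 0 ↔ x ∈ T.S a :=
  Submodule.Quotient.mk_eq_zero _

theorem quotMk_surj {R : GAlgebra k G} {N : GrMod R} (T : GrSubmodule N) {a : G} :
    Function.Surjective ((quotMk T).app a) :=
  (T.S a).mkQ_surjective

/-- Binary direct sums. -/
def prodMod {R : GAlgebra k G} (M N : GrMod R) : GrMod R where
  M a := M.M a × N.M a
  act {a b} := LinearMap.mk₂ k (fun x r => (M.act x.1 r, N.act x.2 r))
    (fun x y r => by simp) (fun c x r => by simp)
    (fun x r s => by simp) (fun c x r => by simp)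
  act_one x := by simp [M.act_one, N.act_one]
  act_mul x r s := by simp [M.act_mul, N.act_mul]

theorem prodMod_act {R : GAlgebra k G} (M N : GrMod R) {a b : G} (x : M.M a) (y : N.M a)
    (r : R.C a b) : (prodMod M N).act (a := a) (b := b) (x, y) r = (M.act x r, N.act y r) := rfl

theorem sat_step {R : GAlgebra k (ℤ × ℤ)} {N : GrMod R} (S : GrSubmodule N)
    {a a' : ℤ × ℤ} [FiniteDimensional k (R.C a a')]
    (hgen : ∃ g : ℤ × ℤ, ∀ b, g ≤ b → ∀ x : R.C a b, x ∈ Submodule.span k {y : R.C a b |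
      ∃ (u : R.C a a') (v : R.C a' b), y = R.mul u v})
    (x : N.M a) (h : ∀ u : R.C a a', S.Sat (N.act x u)) : S.Sat x := by
  obtain ⟨g, hg⟩ := hgen
  let B := Module.finBasis k (R.C a a')
  choose f hf using fun i => h (B i)
  obtain ⟨g1, hg1⟩ := Finite.exists_le f
  refine ⟨g ⊔ g1, fun b hb r => ?_⟩
  have hr := hg b (le_sup_left.trans hb) r
  induction hr using Submodule.span_induction with
  | mem y hy =>
    obtain ⟨u, v, rfl⟩ := hy
    rw [← N.act_mul, ← B.sum_repr u]
    simp only [map_sum, map_smul, LinearMap.sum_apply, LinearMap.smul_apply]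
    exact Submodule.sum_mem _ fun i _ => Submodule.smul_mem _ _
      (hf i b ((hg1 i).trans (le_sup_right.trans hb)) v)
  | zero => simp
  | add y z _ _ hy hz => rw [map_add]; exact Submodule.add_mem _ hy hz
  | smul c y _ hy => rw [map_smul]; exact Submodule.smul_mem _ _ hy

theorem sat_of_le {R : GAlgebra k (ℤ × ℤ)} (hR : Standing R) {N : GrMod R}
    (S : GrSubmodule N) (p q : ℤ) (d e : ℕ) : ∀ (i j : ℤ), p = i + d → q = j + e →
    ∀ x : N.M (i, j), (∀ r : R.C (i, j) (p, q), S.Sat (N.act x r)) → S.Sat x := by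
  have := hR.finDim
  induction d with
  | zero =>
    induction e with
    | zero =>
      intro i j hp hq x h
      obtain rfl : p = i := by simpa using hp
      obtain rfl : q = j := by simpa using hq
      have := h (R.one _)
      rwa [N.act_one] at this
    | succ e ih =>
      intro i j hp hq x h
      refine sat_step S (a' := (i, j + 1)) ⟨(i, j + 1), ?_⟩ x fun u =>
        ih i (j + 1) hp (by push_cast at hq; omega) _ fun r => ?_
      · rintro ⟨m, n⟩ hb
        exact hR.genV i j m n hb.1 (by have := hb.2; simp at this; omega)
      · rw [N.act_mul]; exact h _
  | succ d ih =>
    intro i j hp hq x h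
    refine sat_step S (a' := (i + 1, j)) ⟨(i + 1, j), ?_⟩ x fun u =>
      ih (i + 1) j (by push_cast at hp; omega) hq _ fun r => ?_
    · rintro ⟨m, n⟩ hb
      exact hR.genH i j m n (by have := hb.1; simp at this; omega) hb.2
    · rw [N.act_mul]; exact h _

theorem sat_sat {R : GAlgebra k (ℤ × ℤ)} (hR : Standing R) {N : GrMod R}
    (S : GrSubmodule N) {a : ℤ × ℤ} (x : N.M a)
    (h : ∃ g0 : ℤ × ℤ, ∀ b, g0 ≤ b → ∀ r : R.C a b, S.Sat (N.act x r)) : S.Sat x := by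
  obtain ⟨g, hg⟩ := h
  obtain ⟨i, j⟩ := a
  have h1 : (i, j) ≤ g ⊔ (i, j) := le_sup_right
  obtain ⟨d, hd⟩ := Int.le.dest h1.1
  obtain ⟨e, he⟩ := Int.le.dest h1.2
  exact sat_of_le hR S _ _ d e i j hd.symm he.symm x (hg _ le_sup_left)

theorem torsionW_iff {R : GAlgebra k (ℤ × ℤ)} {M N : GrMod R} (f : M ⟶ N) :
    torsionW R f ↔ (∀ (a : ℤ × ℤ) (x : M.M a), GrHom.app f a x = 0 → (botSub M).Sat x) ∧
      (∀ (a : ℤ × ℤ) (y : N.M a), (rangeSub f).Sat y) := Iff.rfl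

theorem torsionW_mult {R : GAlgebra k (ℤ × ℤ)} (hR : Standing R) :
    (torsionW R).IsMultiplicative where
  id_mem M := by
    refine ⟨fun a x hx => ⟨a, fun b _ r => ?_⟩, fun a y => ⟨a, fun b _ r => ⟨_, rfl⟩⟩⟩
    have hx : x = 0 := hx
    rw [hx]; simp
  comp_mem {X Y Z} f g hf hg := by
    rw [torsionW_iff] at *
    constructor
    · intro a x hx
      apply sat_sat hR
      obtain ⟨g0, h0⟩ := hg.1 a (GrHom.app f a x) hx
      refine ⟨g0, fun b hb r => hf.1 b _ ?_⟩
      rw [GrHom.natural]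
      exact h0 b hb r
    · intro a z
      apply sat_sat hR
      obtain ⟨g0, h0⟩ := hg.2 a z
      refine ⟨g0, fun b hb r => ?_⟩
      obtain ⟨y, hy⟩ := h0 b hb r
      obtain ⟨g1, h1⟩ := hf.2 b y
      refine ⟨g1, fun c hc s => ?_⟩
      obtain ⟨x, hx⟩ := h1 c hc s
      refine ⟨x, ?_⟩
      change GrHom.app g c (GrHom.app f c x) = _
      rw [hx, GrHom.natural, hy]

/-- The image of `f₁ - f₂`. -/
def diffSub {R : GAlgebra k G} {M N : GrMod R} (f₁ f₂ : GrHom M N) : GrSubmodule N :=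
  rangeSub ⟨fun a => f₁.app a - f₂.app a, fun x r => by
    simp [f₁.natural, f₂.natural]⟩

theorem torsion_ext {R : GAlgebra k (ℤ × ℤ)} {X' X Y : GrMod R} (f₁ f₂ : X ⟶ Y) (s : X' ⟶ X)
    (hs : ∀ (a : ℤ × ℤ) (y : X.M a), (rangeSub s).Sat y) (h : s ≫ f₁ = s ≫ f₂) :
    ∃ (Y' : GrMod R) (t : Y ⟶ Y') (_ : torsionW R t), f₁ ≫ t = f₂ ≫ t := by
  refine ⟨quotMod (diffSub f₁ f₂), quotMk _, ⟨?_, ?_⟩, ?_⟩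
  · intro a y hy
    obtain ⟨x, rfl⟩ := (quotMk_eq_zero _ _).1 hy
    obtain ⟨g0, h0⟩ := hs a x
    refine ⟨g0, fun b hb r => ?_⟩
    obtain ⟨x', hx'⟩ := h0 b hb r
    have h2 : GrHom.app f₁ b (GrHom.app s b x') = GrHom.app f₂ b (GrHom.app s b x') :=
      congrArg (fun φ : GrHom X' Y => φ.app b x') h
    change Y.act (GrHom.app f₁ a x - GrHom.app f₂ a x) r = 0
    rw [map_sub, LinearMap.sub_apply, ← GrHom.natural, ← GrHom.natural, ← hx', h2, sub_self]
  · intro a y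
    exact ⟨a, fun b _ r => quotMk_surj _ _⟩
  · apply GrHom.ext
    funext a
    apply LinearMap.ext
    intro x
    change (quotMk _).app a (GrHom.app f₁ a x) = (quotMk _).app a (GrHom.app f₂ a x)
    rw [← sub_eq_zero, ← map_sub, quotMk_eq_zero]
    exact ⟨x, rfl⟩

/-- The submodule used for the pushout. -/
def pushSub {R : GAlgebra k G} {X X' Y : GrMod R} (f : GrHom X Y) (s : GrHom X X') :
    GrSubmodule (prodMod Y X') :=
  rangeSub (M := X) (N := prodMod Y X') ⟨fun a => (f.app a).prod (-(s.app a)), fun {a b} x r => by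
    refine Prod.ext (f.natural x r) ?_
    change -(s.app b (X.act x r)) = X'.act (-(s.app a x)) r
    rw [s.natural, map_neg, LinearMap.neg_apply]⟩

/-- Left inclusion. -/
def inlHom {R : GAlgebra k G} (M N : GrMod R) : GrHom M (prodMod M N) where
  app a := LinearMap.inl k (M.M a) (N.M a)
  natural {a b} x r := by
    refine Prod.ext rfl ?_
    change (0 : N.M b) = N.act (0 : N.M a) r
    simp

/-- Right inclusion. -/
def inrHom {R : GAlgebra k G} (M N : GrMod R) : GrHom N (prodMod M N) where
  app a := LinearMap.inr k (M.M a) (N.M a)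
  natural {a b} x r := by
    refine Prod.ext ?_ rfl
    change (0 : M.M b) = M.act (0 : M.M a) r
    simp

/-- Composition of morphisms, unbundled. -/
def grComp {R : GAlgebra k G} {M N P : GrMod R} (f : M ⟶ N) (g : N ⟶ P) : M ⟶ P := f ≫ g

theorem torsion_push {R : GAlgebra k (ℤ × ℤ)} {X X' Y : GrMod R} (f : X ⟶ Y) (s : X ⟶ X')
    (hs : torsionW R s) :
    ∃ (Y' : GrMod R) (f' : X' ⟶ Y') (s' : Y ⟶ Y') (_ : torsionW R s'), f ≫ s' = s ≫ f' := by
  refine ⟨quotMod (pushSub f s), grComp (inrHom Y X') (quotMk _), grComp (inlHom Y X') (quotMk _),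
    ⟨?_, ?_⟩, ?_⟩
  · intro a y hy
    obtain ⟨x, hx⟩ := (quotMk_eq_zero (pushSub f s) ((inlHom Y X').app a y)).1 hy
    have h1 : GrHom.app f a x = y := congrArg Prod.fst hx
    have h2 : -GrHom.app s a x = 0 := congrArg Prod.snd hx
    obtain ⟨g0, h0⟩ := hs.1 a x (by simpa using h2)
    refine ⟨g0, fun b hb r => ?_⟩
    rw [← h1, ← GrHom.natural, h0 b hb r, map_zero]
  · intro a z
    obtain ⟨⟨y, x'⟩, rfl⟩ := quotMk_surj _ z
    obtain ⟨g0, h0⟩ := hs.2 a x'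
    refine ⟨g0, fun b hb r => ?_⟩
    obtain ⟨x, hx⟩ := h0 b hb r
    refine ⟨Y.act y r + GrHom.app f b x, ?_⟩
    refine Eq.trans ?_ ((quotMk (pushSub f s)).natural (a := a) (b := b) (y, x') r)
    change (quotMk (pushSub f s)).app b ((inlHom Y X').app b _) =
      (quotMk (pushSub f s)).app b _
    rw [← sub_eq_zero, ← map_sub, quotMk_eq_zero]
    refine ⟨x, Prod.ext ?_ ?_⟩
    · change GrHom.app f b x = (Y.act y r + GrHom.app f b x) - Y.act y r
      abel
    · change -GrHom.app s b x = 0 - X'.act x' r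
      rw [hx, zero_sub]
  · apply GrHom.ext
    funext a
    apply LinearMap.ext
    intro x
    change (quotMk (pushSub f s)).app a ((inlHom Y X').app a (GrHom.app f a x)) =
      (quotMk (pushSub f s)).app a ((inrHom Y X').app a (GrHom.app s a x))
    rw [← sub_eq_zero, ← map_sub, quotMk_eq_zero]
    refine ⟨x, Prod.ext ?_ ?_⟩
    · change GrHom.app f a x = GrHom.app f a x - 0
      rw [sub_zero]
    · change -GrHom.app s a x = 0 - GrHom.app s a x
      rw [zero_sub]

theorem torsionW_left {R : GAlgebra k (ℤ × ℤ)} (hR : Standing R) :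
    (torsionW R).HasLeftCalculusOfFractions :=
  { torsionW_mult hR with
    exists_leftFraction := fun X Y φ => by
      obtain ⟨Y', f', s', hs', h⟩ := torsion_push φ.f φ.s φ.hs
      exact ⟨⟨f', s', hs'⟩, h⟩
    ext := fun X' X Y f₁ f₂ s hs h => torsion_ext f₁ f₂ s hs.2 h }

theorem torsion_epi {R : GAlgebra k (ℤ × ℤ)} (hR : Standing R) {P F : GrMod R} (φ : P ⟶ F)
    (hφ : ∀ (a : ℤ × ℤ) (y : F.M a), (rangeSub φ).Sat y) :
    Epi ((torsionW R).Q.map φ) := by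
  have := torsionW_left hR
  have inst : (torsionW R).Q.IsLocalization (torsionW R) := inferInstance
  constructor
  intro Z g₁ g₂ hg
  obtain ⟨Z, rfl⟩ : ∃ Z', (torsionW R).Q.obj Z' = Z :=
    ⟨_, (Localization.Construction.objEquiv (torsionW R)).apply_symm_apply Z⟩
  obtain ⟨α, rfl, rfl⟩ := Localization.exists_leftFraction₂ (torsionW R).Q (torsionW R) g₁ g₂
  have hg' := congrArg (fun q => q ≫ (torsionW R).Q.map α.s) hg
  have e1 := α.fst.map_comp_map_s (torsionW R).Q (Localization.inverts _ _)
  have e2 := α.snd.map_comp_map_s (torsionW R).Q (Localization.inverts _ _)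
  have hiso : IsIso ((torsionW R).Q.map α.s) := Localization.inverts _ (torsionW R) _ α.hs
  rw [← cancel_mono ((torsionW R).Q.map α.s)]
  refine e1.trans (Eq.trans ?_ e2.symm)
  have hg2 : (torsionW R).Q.map (φ ≫ α.f) = (torsionW R).Q.map (φ ≫ α.f') := by
    simp only [Category.assoc] at hg'
    rw [Functor.map_comp, Functor.map_comp]
    exact ((congrArg (fun q => (torsionW R).Q.map φ ≫ q) e1).symm.trans hg').trans
      (congrArg (fun q => (torsionW R).Q.map φ ≫ q) e2)
  obtain ⟨T, t, ht, h⟩ := (MorphismProperty.map_eq_iff_postcomp _ (torsionW R) _ _).1 hg2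
  obtain ⟨T', t', ht', h'⟩ := torsion_ext (α.f ≫ t) (α.f' ≫ t) φ hφ (by simpa using h)
  refine (MorphismProperty.map_eq_iff_postcomp _ (torsionW R) _ _).2
    ⟨T', t ≫ t', (torsionW R).comp_mem _ _ ht ht', by simpa using h'⟩

/-- The components of the canonical morphism. -/
def canLin (R : GAlgebra k G) (a c b : G) [FiniteDimensional k (R.C a c)] :
    (Fin (Module.finrank k (R.C a c)) → R.C c b) →ₗ[k] R.C a b :=
  ∑ i, (R.mul (Module.finBasis k (R.C a c) i)).comp (LinearMap.proj i)

theorem canLin_apply (R : GAlgebra k G) (a c b : G) [FiniteDimensional k (R.C a c)]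
    (x : Fin (Module.finrank k (R.C a c)) → R.C c b) :
    canLin R a c b x = ∑ i, R.mul (Module.finBasis k (R.C a c) i) (x i) := by
  simp only [canLin, LinearMap.sum_apply, LinearMap.comp_apply, LinearMap.proj_apply]

theorem canLin_natural (R : GAlgebra k G) (a c b d : G) [FiniteDimensional k (R.C a c)]
    (x : Fin (Module.finrank k (R.C a c)) → R.C c b) (r : R.C b d) :
    canLin R a c d (fun i => R.mul (x i) r) = R.mul (canLin R a c b x) r := by
  simp only [canLin_apply, map_sum, LinearMap.sum_apply, R.mul_assoc]

/-- The canonical morphism `e_c R^{⊕ N} → e_a R`, `N = dim R_{a,c}`. -/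
def canHom (R : GAlgebra k G) (a c : G) [FiniteDimensional k (R.C a c)] :
    fdsum (fun _ : Fin (Module.finrank k (R.C a c)) => freeMod R c) ⟶ freeMod R a where
  app b := canLin R a c b
  natural {b d} x r := canLin_natural R a c b d x r

theorem canLin_mul (R : GAlgebra k G) (a c : G) [FiniteDimensional k (R.C a c)] {b : G}
    (u : R.C a c) (v : R.C c b) :
    R.mul u v ∈ LinearMap.range (canLin R a c b) := by
  refine ⟨fun i => (Module.finBasis k (R.C a c)).repr u i • v, ?_⟩
  rw [canLin_apply]
  conv_rhs => rw [← (Module.finBasis k (R.C a c)).sum_repr u]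
  simp only [map_sum, map_smul, LinearMap.sum_apply, LinearMap.smul_apply]

theorem canHom_surj (R : GAlgebra k G) (a c : G) [FiniteDimensional k (R.C a c)] {b : G}
    (h : ∀ x : R.C a b, x ∈ Submodule.span k {y : R.C a b |
      ∃ (u : R.C a c) (v : R.C c b), y = R.mul u v}) :
    Function.Surjective (GrHom.app (canHom R a c) b) := by
  intro x
  have h2 : Submodule.span k {y : R.C a b | ∃ (u : R.C a c) (v : R.C c b), y = R.mul u v} ≤
      LinearMap.range (canLin R a c b) := by
    rw [Submodule.span_le]
    rintro _ ⟨u, v, rfl⟩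
    exact canLin_mul R a c u v
  exact h2 (h x)

end Helpers

/-- For each `(m,n) ∈ ℤ²` there are morphisms
`e_{(m+1,n)}R^{⊕N} → e_{(m,n)}R` (with `N = dim_k R_{(m,n),(m+1,n)}`)
and `e_{(m,n+1)}R^{⊕N'} → e_{(m,n)}R` (with `N' = dim_k R_{(m,n),(m,n+1)}`)
in `Gr(R)`, surjective in all degrees `(x,y)` with `x > m, y ≥ n`
(resp. `x ≥ m, y > n`), with torsion cokernel; hence both become
epimorphisms in `QGr(R)`. -/
theorem epi_onto_free (k : Type) [Field k] (R : GAlgebra k (ℤ × ℤ))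
    (hR : Standing R) (m n : ℤ) :
    (∃ φ : fdsum (fun _ : Fin (Module.finrank k (R.C (m, n) (m + 1, n))) =>
        freeMod R (m + 1, n)) ⟶ freeMod R (m, n),
      (∀ x y : ℤ, m < x → n ≤ y → Function.Surjective (GrHom.app φ (x, y))) ∧
      (∀ (a : ℤ × ℤ) (z : R.C (m, n) a), ∃ g0 : ℤ × ℤ, ∀ b : ℤ × ℤ, g0 ≤ b →
        ∀ r : R.C a b, R.mul z r ∈ LinearMap.range (GrHom.app φ b)) ∧
      CategoryTheory.Epi ((torsionW R).Q.map φ)) ∧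
    (∃ ψ : fdsum (fun _ : Fin (Module.finrank k (R.C (m, n) (m, n + 1))) =>
        freeMod R (m, n + 1)) ⟶ freeMod R (m, n),
      (∀ x y : ℤ, m ≤ x → n < y → Function.Surjective (GrHom.app ψ (x, y))) ∧
      (∀ (a : ℤ × ℤ) (z : R.C (m, n) a), ∃ g0 : ℤ × ℤ, ∀ b : ℤ × ℤ, g0 ≤ b →
        ∀ r : R.C a b, R.mul z r ∈ LinearMap.range (GrHom.app ψ b)) ∧
      CategoryTheory.Epi ((torsionW R).Q.map ψ)) := by
  have := hR.finDim
  constructor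
  · have hs : ∀ x y : ℤ, m < x → n ≤ y →
        Function.Surjective (GrHom.app (canHom R (m, n) (m + 1, n)) (x, y)) :=
      fun x y hx hy => canHom_surj R _ _ (hR.genH m n x y hx hy)
    have ht : ∀ (a : ℤ × ℤ) (z : R.C (m, n) a), ∃ g0 : ℤ × ℤ, ∀ b : ℤ × ℤ, g0 ≤ b →
        ∀ r : R.C a b, R.mul z r ∈
          LinearMap.range (GrHom.app (canHom R (m, n) (m + 1, n)) b) :=
      fun a z => ⟨(m + 1, n), fun b hb r => hs b.1 b.2 (Int.lt_of_add_one_le hb.1) hb.2 _⟩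
    exact ⟨canHom R (m, n) (m + 1, n), hs, ht, torsion_epi hR _ ht⟩
  · have hs : ∀ x y : ℤ, m ≤ x → n < y →
        Function.Surjective (GrHom.app (canHom R (m, n) (m, n + 1)) (x, y)) :=
      fun x y hx hy => canHom_surj R _ _ (hR.genV m n x y hx hy)
    have ht : ∀ (a : ℤ × ℤ) (z : R.C (m, n) a), ∃ g0 : ℤ × ℤ, ∀ b : ℤ × ℤ, g0 ≤ b →
        ∀ r : R.C a b, R.mul z r ∈
          LinearMap.range (GrHom.app (canHom R (m, n) (m, n + 1)) b) :=
      fun a z => ⟨(m, n + 1), fun b hb r => hs b.1 b.2 hb.1 (Int.lt_of_add_one_le hb.2) _⟩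
    exact ⟨canHom R (m, n) (m, n + 1), hs, ht, torsion_epi hR _ ht⟩
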